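/- arXiv:1310.4678 — 4 statements merged into one kernel-verified Lean document; each statement's English description precedes it below -/
import Mathlib

section
/- Let F be a finite nonempty index set, let g_f : [0,1] → ℝ be continuous for each f ∈ F, and let u₀ ∈ (0,1). Suppose (i) each g_f is constant on [0,u₀], and (ii) for every u ∈ (u₀,1] there exists f ∈ F such that g_f is not constant on [0,u]. Define the measure of time-variation 𝒟(u) = max_{f∈F} sup_{v∈[0,u]} |D(u,v,g_f)| for u ∈ (0,1]. Then 𝒟(u) = 0 for all u ∈ (0,u₀] and 𝒟(u) > 0 for all u ∈ (u₀,1]. -/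
/-!
If `g` is constant on `[0,u]`, then `D(u,·,g)` vanishes there by direct computation
(`cusumD_eq_zero_of_const`). Conversely, `D(u,·,g) = 0` on `[0,u]` says that the primitive of
`g` is linear, so differentiating it shows that `g` is constant
(`const_of_cusumD_eq_zero`). Hence some `|D(u,v,g)|` is positive for a continuous `g` that is
nonconstant on `[0,u]`, and boundedness of `D` passes this on to the supremum.
-/

open MeasureTheory

/-- The CUSUM-type measure of time-variation for a single moment function `g`:
`D(u,v,g) = ∫₀^v g(w) dw − (v/u)·∫₀^u g(w) dw`. -/
noncomputable def cusumD (g : ℝ → ℝ) (u v : ℝ) : ℝ :=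
  (∫ w in (0:ℝ)..v, g w) - (v / u) * ∫ w in (0:ℝ)..u, g w

/-- The function `v ↦ |D(u,v,g)|` is bounded on the compact interval `[0,u]`, so the
supremum defining the measure of time-variation is a genuine least upper bound. -/
lemma bddAbove_abs_cusumD {g : ℝ → ℝ} (hg : Continuous g) (u : ℝ) :
    BddAbove ((fun v => |cusumD g u v|) '' Set.Icc (0:ℝ) u) := by
  have hint : Continuous fun v : ℝ => ∫ w in (0:ℝ)..v, g w :=
    intervalIntegral.continuous_primitive (fun a b => hg.intervalIntegrable a b) 0
  have hcont : Continuous fun v => |cusumD g u v| := by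
    unfold cusumD
    fun_prop
  exact (isCompact_Icc.image hcont).bddAbove

lemma cusumD_eq_zero_of_const {g : ℝ → ℝ} {u v c : ℝ} (hv : v ∈ Set.Icc (0:ℝ) u) (hu : 0 < u)
    (h : ∀ w ∈ Set.Icc (0:ℝ) u, g w = c) : cusumD g u v = 0 := by
  have key : ∀ x ∈ Set.Icc (0:ℝ) u, ∫ w in (0:ℝ)..x, g w = x * c := by
    intro x hx
    rw [intervalIntegral.integral_congr (g := fun _ => c)]
    · simp
    · intro w hw
      rw [Set.uIcc_of_le hx.1] at hw
      exact h w ⟨hw.1, hw.2.trans hx.2⟩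
  rw [cusumD, key v hv, key u ⟨hu.le, le_rfl⟩]
  field_simp
  ring

/-- If `D(u,·,g)` vanishes on `[0,u]`, the primitive of `g` is linear there, so `g` equals its
mean over `[0,u]` on the open interval, and on the closed one by continuity. -/
lemma const_of_cusumD_eq_zero {g : ℝ → ℝ} (hg : Continuous g) {u : ℝ} (hu : 0 < u)
    (h : ∀ v ∈ Set.Icc (0:ℝ) u, cusumD g u v = 0) :
    ∃ c : ℝ, ∀ w ∈ Set.Icc (0:ℝ) u, g w = c := by
  set m : ℝ := (∫ w in (0:ℝ)..u, g w) / u with hm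
  have hIoo : Set.EqOn g (fun _ => m) (Set.Ioo 0 u) := by
    intro v hv
    have h1 : HasDerivAt (fun x => ∫ w in (0:ℝ)..x, g w) (g v) v :=
      intervalIntegral.integral_hasDerivAt_right (hg.intervalIntegrable 0 v)
        (hg.stronglyMeasurableAtFilter _ _) hg.continuousAt
    have h2 : HasDerivAt (fun x : ℝ => x * m) m v := by
      simpa using (hasDerivAt_id v).mul_const m
    refine h1.unique (h2.congr_of_eventuallyEq ?_)
    filter_upwards [isOpen_Ioo.mem_nhds hv] with x hx
    have hx0 := h x ⟨hx.1.le, hx.2.le⟩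
    rw [cusumD, sub_eq_zero] at hx0
    rw [hx0, hm]
    ring
  refine ⟨m, fun w hw => ?_⟩
  rw [← closure_Ioo hu.ne] at hw
  exact hIoo.closure hg continuous_const hw

/-- Given a finite nonempty family of continuous moment functions `g f`, each constant
on `[0,u₀]` and such that for every `u ∈ (u₀,1]` some `g f` is nonconstant on `[0,u]`,
the measure of time-variation `𝒟(u) = max_f sup_{v ∈ [0,u]} |D(u,v,g f)|` vanishes on
`(0,u₀]` and is strictly positive on `(u₀,1]`. -/
theorem stmt2 {ι : Type*} (F : Finset ι) (hF : F.Nonempty)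
    (g : ι → ℝ → ℝ) (hg : ∀ f ∈ F, Continuous (g f))
    (u₀ : ℝ) (hu₀ : u₀ ∈ Set.Ioo (0:ℝ) 1)
    (hconst : ∀ f ∈ F, ∃ c : ℝ, ∀ w ∈ Set.Icc (0:ℝ) u₀, g f w = c)
    (hvar : ∀ u ∈ Set.Ioc u₀ (1:ℝ), ∃ f ∈ F,
      ¬ ∃ c : ℝ, ∀ w ∈ Set.Icc (0:ℝ) u, g f w = c)
    (𝒟 : ℝ → ℝ)
    (h𝒟 : ∀ u ∈ Set.Ioc (0:ℝ) 1,
      𝒟 u = F.sup' hF fun f => sSup ((fun v => |cusumD (g f) u v|) '' Set.Icc (0:ℝ) u)) :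
    (∀ u ∈ Set.Ioc (0:ℝ) u₀, 𝒟 u = 0) ∧ (∀ u ∈ Set.Ioc u₀ (1:ℝ), 0 < 𝒟 u) := by
  refine ⟨fun u hu => ?_, fun u hu => ?_⟩
  · rw [h𝒟 u ⟨hu.1, hu.2.trans hu₀.2.le⟩]
    have hzero : ∀ f ∈ F, sSup ((fun v => |cusumD (g f) u v|) '' Set.Icc (0:ℝ) u) = 0 := by
      intro f hf
      obtain ⟨c, hc⟩ := hconst f hf
      have himg : (fun v => |cusumD (g f) u v|) '' Set.Icc (0:ℝ) u = {0} := by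
        rw [Set.image_congr (g := fun _ => (0:ℝ)) fun v hv => ?_]
        · exact (Set.nonempty_Icc.2 hu.1.le).image_const 0
        · rw [cusumD_eq_zero_of_const hv hu.1 fun w hw => hc w ⟨hw.1, hw.2.trans hu.2⟩, abs_zero]
      rw [himg, csSup_singleton]
    rw [Finset.sup'_congr hF rfl hzero, Finset.sup'_const]
  · have hu0 : 0 < u := hu₀.1.trans hu.1
    rw [h𝒟 u ⟨hu0, hu.2⟩]
    obtain ⟨f, hf, hne⟩ := hvar u hu
    obtain ⟨v, hv, hv0⟩ : ∃ v ∈ Set.Icc (0:ℝ) u, cusumD (g f) u v ≠ 0 := by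
      by_contra! hall
      exact hne (const_of_cusumD_eq_zero (hg f hf) hu0 hall)
    refine (Finset.lt_sup'_iff hF).2 ⟨f, hf, (abs_pos.2 hv0).trans_le ?_⟩
    exact le_csSup (bddAbove_abs_cusumD (hg f hf) u) ⟨v, hv, rfl⟩
end

section
/- Let u₀ ∈ (0,1), κ > 0, c > 0, T > 0, and let τ ≥ M ≥ 0. Let D, D̂ : [0,1] → ℝ be measurable functions such that D(u) = 0 for u ∈ [0,u₀], D(u) ≥ c·(u−u₀)^κ for u ∈ (u₀,1], and sup_{u∈[0,1]} |D̂(u) − D(u)| ≤ M/√T. Then the quantity û₀ := ∫₀¹ 1{√T·D̂(u) ≤ τ} du satisfies u₀ ≤ û₀ ≤ u₀ + ((τ+M)/(c·√T))^{1/κ}. -/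
/-! The integrand is the indicator of the set where the scaled estimator `√T · D̂` stays below
the threshold `τ`, and `√T · D̂` is within `M` of `√T · D` on `[0, 1]`. On `[0, u₀]` we have
`D = 0`, so `√T · D̂ ≤ M ≤ τ` and the integrand is `1`; this gives the lower bound. Put
`A = (τ + M) / (c √T)`. For `u ∈ (u₀ + A ^ (1 / κ), 1]` we have `(u - u₀) ^ κ > A`, so
`√T · D u > τ + M`, hence `√T · D̂ u > τ` and the integrand vanishes; the remaining interval
contributes at most its length. -/

open MeasureTheory

/-- Deterministic core of Theorem 5.3: if the measure of time-variation `D` vanishes on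
`[0,u₀]`, grows at rate `c·(u−u₀)^κ` after `u₀`, and the estimator `D̂` is uniformly within
`M/√T` of `D`, then the change point estimator `û₀ = ∫₀¹ 1{√T·D̂(u) ≤ τ} du` satisfies
`u₀ ≤ û₀ ≤ u₀ + ((τ+M)/(c·√T))^{1/κ}`. -/
theorem stmt7 (u₀ : ℝ) (hu₀ : u₀ ∈ Set.Ioo (0:ℝ) 1)
    (κ : ℝ) (hκ : 0 < κ) (c : ℝ) (hc : 0 < c) (T : ℝ) (hT : 0 < T)
    (τ M : ℝ) (hM : 0 ≤ M) (hτM : M ≤ τ)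
    (D Dhat : ℝ → ℝ) (hD : Measurable D) (hDhat : Measurable Dhat)
    (hD0 : ∀ u ∈ Set.Icc (0:ℝ) u₀, D u = 0)
    (hDgrow : ∀ u ∈ Set.Ioc u₀ (1:ℝ), c * (u - u₀) ^ κ ≤ D u)
    (herr : ∀ u ∈ Set.Icc (0:ℝ) 1, |Dhat u - D u| ≤ M / Real.sqrt T) :
    u₀ ≤ (∫ u in (0:ℝ)..1, (if Real.sqrt T * Dhat u ≤ τ then (1:ℝ) else 0)) ∧
      (∫ u in (0:ℝ)..1, (if Real.sqrt T * Dhat u ≤ τ then (1:ℝ) else 0)) ≤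
        u₀ + ((τ + M) / (c * Real.sqrt T)) ^ (1 / κ) := by
  obtain ⟨hu0, hu1⟩ := hu₀
  have hs : 0 < Real.sqrt T := Real.sqrt_pos.mpr hT
  set f : ℝ → ℝ := fun u => if Real.sqrt T * Dhat u ≤ τ then (1:ℝ) else 0 with hf
  have hf0 : ∀ u, 0 ≤ f u := fun u => by simp only [hf]; split_ifs <;> norm_num
  have hf1 : ∀ u, f u ≤ 1 := fun u => by simp only [hf]; split_ifs <;> norm_num
  have hfm : Measurable f :=
    Measurable.ite (measurableSet_le (hDhat.const_mul _) measurable_const)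
      measurable_const measurable_const
  have hfi : ∀ a b : ℝ, IntervalIntegrable f volume a b := fun a b =>
    (intervalIntegrable_const (c := (1:ℝ))).mono_fun hfm.aestronglyMeasurable
      (Filter.Eventually.of_forall fun u => by
        simpa [abs_of_nonneg (hf0 u)] using hf1 u)
  have hscale : ∀ u ∈ Set.Icc (0:ℝ) 1, |Real.sqrt T * Dhat u - Real.sqrt T * D u| ≤ M := by
    intro u hu
    rw [← mul_sub, abs_mul, abs_of_pos hs, mul_comm]
    exact (le_div_iff₀ hs).mp (herr u hu)
  have hle : ∀ a b : ℝ, a ≤ b → ∫ u in a..b, f u ≤ b - a := by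
    intro a b hab
    simpa using intervalIntegral.integral_mono_on hab (hfi a b)
      (intervalIntegrable_const (c := (1:ℝ))) fun u _ => hf1 u
  have hsplit : ∀ v : ℝ, ∫ u in (0:ℝ)..1, f u = (∫ u in (0:ℝ)..v, f u) + ∫ u in v..1, f u :=
    fun v => (intervalIntegral.integral_add_adjacent_intervals (hfi 0 v) (hfi v 1)).symm
  change u₀ ≤ (∫ u in (0:ℝ)..1, f u) ∧ (∫ u in (0:ℝ)..1, f u) ≤ _
  constructor
  · have hleft : ∫ u in (0:ℝ)..u₀, f u = u₀ := by
      have hone : ∀ u ∈ Set.uIcc (0:ℝ) u₀, f u = 1 := by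
        intro u hu
        rw [Set.uIcc_of_le hu0.le] at hu
        have h := hscale u ⟨hu.1, hu.2.trans hu1.le⟩
        rw [hD0 u hu, mul_zero, sub_zero] at h
        exact if_pos ((le_abs_self _).trans (h.trans hτM))
      rw [intervalIntegral.integral_congr hone]
      simp
    rw [hsplit u₀, hleft]
    exact le_add_of_nonneg_right (intervalIntegral.integral_nonneg hu1.le fun u _ => hf0 u)
  · set A : ℝ := (τ + M) / (c * Real.sqrt T) with hA
    have hA0 : 0 ≤ A := div_nonneg (by linarith) (by positivity)
    have hδ : 0 ≤ A ^ (1 / κ) := Real.rpow_nonneg hA0 _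
    rcases le_total 1 (u₀ + A ^ (1 / κ)) with h1 | h1
    · linarith [hle 0 1 zero_le_one]
    · -- The integral over `v..1` only sees the half-open interval `(v, 1]`, so the
      -- endpoint `v = u₀ + A ^ (1 / κ)`, where the threshold may be attained, is harmless.
      have hright : ∫ u in (u₀ + A ^ (1 / κ))..1, f u = 0 := by
        have hzero : ∀ u ∈ Set.Ioc (u₀ + A ^ (1 / κ)) 1, f u = 0 := by
          intro u hu
          have hlt : A < (u - u₀) ^ κ := by
            have h := Real.rpow_lt_rpow hδ (lt_sub_iff_add_lt'.mpr hu.1) hκ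
            rwa [← Real.rpow_mul hA0, one_div_mul_cancel hκ.ne', Real.rpow_one] at h
          have huu : u₀ < u := by linarith [hu.1]
          have hD' := mul_le_mul_of_nonneg_left (hDgrow u ⟨huu, hu.2⟩) hs.le
          have hlt' := (div_lt_iff₀ (mul_pos hc hs)).mp hlt
          have h := (abs_le.mp (hscale u ⟨(hu0.trans huu).le, hu.2⟩)).1
          refine if_neg (not_le.mpr ?_)
          linarith
        rw [intervalIntegral.integral_of_le h1, setIntegral_congr_fun measurableSet_Ioc hzero]
        simp
      rw [hsplit (u₀ + A ^ (1 / κ)), hright]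
      linarith [hle 0 (u₀ + A ^ (1 / κ)) (by linarith)]
end

section
/- Let u₀ ∈ (0,1), κ > 0 and c_κ > 0. Let D : [u₀,1] → ℝ be continuous with D(u₀) = 0, D(u) > 0 for all u ∈ (u₀,1], and D(u)/(u−u₀)^κ → c_κ as u ↓ u₀. Let (τ_T)_{T≥1} be positive reals with τ_T → ∞ and τ_T/√T → 0, and set γ_T = (τ_T/√T)^{1/κ}. Then there exist constants 0 < C₁ ≤ C₂ < ∞ and T₀ such that for all T ≥ T₀: C₁·γ_T² ≤ (∫_{u₀}^1 1{√T·D(u) ≤ τ_T} du)² ≤ C₂·γ_T². -/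
open MeasureTheory Filter

/-!
Near `u₀` the rate condition makes `D u` comparable to `(u - u₀) ^ κ`; away from `u₀`, compactness
bounds `D` below, so the lower comparison `a * (u - u₀) ^ κ ≤ D u` holds on all of `(u₀, 1]`
(`exists_lower_rate`). Writing `r = τ_T / √T = γ_T ^ κ`, the sublevel set `{u ∈ (u₀, 1] | D u ≤ r}`
is therefore contained in `(u₀, u₀ + α γ_T]`, and it contains `(u₀, u₀ + β γ_T]` once `γ_T` is small
(`exists_upper_rate`). The integral is the length of the sublevel set, hence lies between
`β γ_T` and `α γ_T`.
-/

/-- The ratio bound valid near `u₀` extends to the whole interval because `D` has a positive minimum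
on the remaining compact part, where `(u - u₀) ^ κ ≤ 1`. -/
lemma exists_lower_rate {u₀ κ cκ : ℝ} (hu₀ : u₀ ∈ Set.Ioo (0:ℝ) 1) (hκ : 0 < κ) (hcκ : 0 < cκ)
    {D : ℝ → ℝ} (hDcont : ContinuousOn D (Set.Icc u₀ 1))
    (hDpos : ∀ u ∈ Set.Ioc u₀ (1:ℝ), 0 < D u)
    (hDrate : Tendsto (fun u => D u / (u - u₀) ^ κ) (nhdsWithin u₀ (Set.Ioi u₀)) (nhds cκ)) :
    ∃ a : ℝ, 0 < a ∧ ∀ u ∈ Set.Ioc u₀ (1:ℝ), a * (u - u₀) ^ κ ≤ D u := by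
  have h1 := hDrate.eventually (eventually_gt_nhds (half_lt_self hcκ))
  obtain ⟨v, hv, hsub⟩ := (mem_nhdsGT_iff_exists_Ioo_subset' hu₀.2).1 h1
  have hv' : u₀ < v := hv
  obtain ⟨m, hm, hmD⟩ : ∃ m : ℝ, 0 < m ∧ ∀ u ∈ Set.Icc v 1, m ≤ D u := by
    rcases (Set.Icc v 1).eq_empty_or_nonempty with he | hne
    · exact ⟨1, one_pos, by simp [he]⟩
    · obtain ⟨w, hw, hmin⟩ := isCompact_Icc.exists_isMinOn hne
        (hDcont.mono (Set.Icc_subset_Icc_left hv'.le))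
      exact ⟨D w, hDpos w ⟨hv'.trans_le hw.1, hw.2⟩, fun u hu => hmin hu⟩
  refine ⟨min (cκ / 2) m, lt_min (half_pos hcκ) hm, fun u hu => ?_⟩
  have hpos : 0 < (u - u₀) ^ κ := Real.rpow_pos_of_pos (sub_pos.2 hu.1) κ
  rcases lt_or_ge u v with huv | huv
  · have h2 : cκ / 2 < D u / (u - u₀) ^ κ := hsub ⟨hu.1, huv⟩
    rw [lt_div_iff₀ hpos] at h2
    exact (mul_le_mul_of_nonneg_right (min_le_left _ _) hpos.le).trans h2.le
  · have h3 : (u - u₀) ^ κ ≤ 1 :=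
      Real.rpow_le_one (sub_pos.2 hu.1).le (by linarith [hu.2, hu₀.1]) hκ.le
    calc min (cκ / 2) m * (u - u₀) ^ κ ≤ m * 1 :=
          mul_le_mul (min_le_right _ _) h3 hpos.le hm.le
      _ ≤ D u := by simpa using hmD u ⟨huv, hu.2⟩

lemma exists_upper_rate {u₀ κ cκ : ℝ} (hcκ : 0 < cκ) {D : ℝ → ℝ}
    (hDrate : Tendsto (fun u => D u / (u - u₀) ^ κ) (nhdsWithin u₀ (Set.Ioi u₀)) (nhds cκ)) :
    ∃ v : ℝ, u₀ < v ∧ ∀ u ∈ Set.Ioo u₀ v, D u ≤ 2 * cκ * (u - u₀) ^ κ := by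
  have h1 := hDrate.eventually (eventually_lt_nhds (show cκ < 2 * cκ by linarith))
  obtain ⟨v, hv, hsub⟩ := (mem_nhdsGT_iff_exists_Ioo_subset' (lt_add_one u₀)).1 h1
  refine ⟨v, hv, fun u hu => ?_⟩
  have h2 : D u / (u - u₀) ^ κ < 2 * cκ := hsub hu
  rw [div_lt_iff₀ (Real.rpow_pos_of_pos (sub_pos.2 hu.1) κ)] at h2
  exact h2.le

lemma exists_pos_mul_rpow_eq_one {a κ : ℝ} (ha : 0 < a) (hκ : 0 < κ) :
    ∃ α : ℝ, 0 < α ∧ a * α ^ κ = 1 := by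
  refine ⟨(a⁻¹) ^ (κ⁻¹), Real.rpow_pos_of_pos (inv_pos.2 ha) _, ?_⟩
  rw [Real.rpow_inv_rpow (inv_pos.2 ha).le hκ.ne', mul_inv_cancel₀ ha.ne']

/-- The integral is the length of the sublevel set; continuity of `D` on `[u₀, 1]` is needed for
measurability of that set. -/
lemma integral_eq_volume {u₀ s t : ℝ} (hu₀ : u₀ ≤ 1) {D : ℝ → ℝ}
    (hDcont : ContinuousOn D (Set.Icc u₀ 1)) :
    (∫ u in u₀..1, (if s * D u ≤ t then (1:ℝ) else 0)) =
      volume.real {u | u ∈ Set.Ioc u₀ 1 ∧ s * D u ≤ t} := by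
  have hcl : IsClosed (Set.Icc u₀ 1 ∩ (fun u => s * D u) ⁻¹' Set.Iic t) :=
    (continuousOn_const.mul hDcont).preimage_isClosed_of_isClosed isClosed_Icc isClosed_Iic
  have hS : {u | u ∈ Set.Ioc u₀ 1 ∧ s * D u ≤ t} =
      (Set.Icc u₀ 1 ∩ (fun u => s * D u) ⁻¹' Set.Iic t) ∩ Set.Ioc u₀ 1 := by
    ext u
    simp only [Set.mem_ofPred_eq, Set.mem_inter_iff, Set.mem_preimage, Set.mem_Iic]
    exact ⟨fun h => ⟨⟨Set.Ioc_subset_Icc_self h.1, h.2⟩, h.1⟩, fun h => ⟨h.2, h.1.2⟩⟩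
  rw [intervalIntegral.integral_of_le hu₀, hS, ← measureReal_restrict_apply hcl.measurableSet,
    ← integral_indicator_one hcl.measurableSet]
  refine setIntegral_congr_fun measurableSet_Ioc fun u hu => ?_
  by_cases h : s * D u ≤ t
  · exact (if_pos h).trans (Set.indicator_of_mem
      (s := Set.Icc u₀ 1 ∩ (fun u => s * D u) ⁻¹' Set.Iic t)
      ⟨Set.Ioc_subset_Icc_self hu, h⟩ (1 : ℝ → ℝ)).symm
  · exact (if_neg h).trans (Set.indicator_of_notMem (fun hm => h hm.2) _).symm

/-- Inequality (5.5): the noiseless mean squared error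
`(∫_{u₀}^1 1{√T·D(u) ≤ τ_T} du)²` is bounded above and below by constant multiples of
`γ_T² = (τ_T/√T)^{2/κ}`, when `D` vanishes at `u₀`, is positive after `u₀`, and satisfies
`D(u)/(u−u₀)^κ → c_κ > 0` as `u ↓ u₀`. -/
theorem stmt12 (u₀ : ℝ) (hu₀ : u₀ ∈ Set.Ioo (0:ℝ) 1)
    (κ : ℝ) (hκ : 0 < κ) (cκ : ℝ) (hcκ : 0 < cκ)
    (D : ℝ → ℝ) (hDcont : ContinuousOn D (Set.Icc u₀ 1))
    (hD0 : D u₀ = 0) (hDpos : ∀ u ∈ Set.Ioc u₀ (1:ℝ), 0 < D u)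
    (hDrate : Tendsto (fun u => D u / (u - u₀) ^ κ) (nhdsWithin u₀ (Set.Ioi u₀)) (nhds cκ))
    (τ : ℕ → ℝ) (hτpos : ∀ T, 0 < τ T)
    (hτtop : Tendsto τ atTop atTop)
    (hτT : Tendsto (fun T : ℕ => τ T / Real.sqrt T) atTop (nhds 0))
    (γ : ℕ → ℝ) (hγ : ∀ T, γ T = (τ T / Real.sqrt T) ^ (1 / κ)) :
    ∃ C₁ C₂ : ℝ, 0 < C₁ ∧ C₁ ≤ C₂ ∧ ∃ T₀ : ℕ, ∀ T : ℕ, T₀ ≤ T →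
      C₁ * γ T ^ 2 ≤ (∫ u in u₀..1, (if Real.sqrt T * D u ≤ τ T then (1:ℝ) else 0)) ^ 2 ∧
      (∫ u in u₀..1, (if Real.sqrt T * D u ≤ τ T then (1:ℝ) else 0)) ^ 2 ≤ C₂ * γ T ^ 2 := by
  obtain ⟨a, ha, hlow⟩ := exists_lower_rate hu₀ hκ hcκ hDcont hDpos hDrate
  obtain ⟨v, hv, hup⟩ := exists_upper_rate hcκ hDrate
  obtain ⟨α, hα, haα⟩ := exists_pos_mul_rpow_eq_one ha hκ
  obtain ⟨β, hβ, hbβ⟩ := exists_pos_mul_rpow_eq_one (mul_pos two_pos hcκ) hκ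
  have hγ0 : Tendsto (fun T => β * γ T) atTop (nhds 0) := by
    have h := (hτT.rpow_const (p := 1 / κ) (Or.inr (by positivity))).const_mul β
    rw [Real.zero_rpow (by positivity), mul_zero] at h
    simpa only [hγ] using h
  have hδ : 0 < min (v - u₀) (1 - u₀) := lt_min (sub_pos.2 hv) (sub_pos.2 hu₀.2)
  obtain ⟨T₀, hT₀⟩ := eventually_atTop.1 (hγ0.eventually (eventually_lt_nhds hδ))
  refine ⟨β ^ 2, max (α ^ 2) (β ^ 2), by positivity, le_max_right _ _, max T₀ 1, fun T hT => ?_⟩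
  have hsmall := hT₀ T ((le_max_left _ _).trans hT)
  have hs1 : β * γ T < v - u₀ := hsmall.trans_le (min_le_left _ _)
  have hs2 : β * γ T < 1 - u₀ := hsmall.trans_le (min_le_right _ _)
  have hTpos : (0:ℝ) < T := by exact_mod_cast (le_max_right T₀ 1).trans hT
  have hsq : 0 < Real.sqrt T := Real.sqrt_pos.2 hTpos
  have hr : 0 < τ T / Real.sqrt T := div_pos (hτpos T) hsq
  have hγpos : 0 < γ T := by rw [hγ]; exact Real.rpow_pos_of_pos hr _
  have hγκ : γ T ^ κ = τ T / Real.sqrt T := by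
    rw [hγ, one_div, Real.rpow_inv_rpow hr.le hκ.ne']
  have hiff : ∀ u, Real.sqrt T * D u ≤ τ T ↔ D u ≤ γ T ^ κ := fun u => by
    rw [hγκ, le_div_iff₀ hsq, mul_comm]
  have hsub1 : Set.Ioc u₀ (u₀ + β * γ T) ⊆ {u | u ∈ Set.Ioc u₀ 1 ∧ Real.sqrt T * D u ≤ τ T} := by
    intro u hu
    refine ⟨⟨hu.1, by linarith [hu.2]⟩, (hiff u).2 ?_⟩
    calc D u ≤ 2 * cκ * (u - u₀) ^ κ := hup u ⟨hu.1, by linarith [hu.2]⟩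
      _ ≤ 2 * cκ * (β * γ T) ^ κ := by
          have : 0 ≤ u - u₀ := (sub_pos.2 hu.1).le
          have : u - u₀ ≤ β * γ T := by linarith [hu.2]
          gcongr
      _ = γ T ^ κ := by
          rw [Real.mul_rpow hβ.le hγpos.le, ← mul_assoc, hbβ, one_mul]
  have hsub2 : {u | u ∈ Set.Ioc u₀ 1 ∧ Real.sqrt T * D u ≤ τ T} ⊆ Set.Ioc u₀ (u₀ + α * γ T) := by
    rintro u ⟨hu, hle⟩
    have h1 := (hlow u hu).trans ((hiff u).1 hle)
    have h2 : a * (α * γ T) ^ κ = γ T ^ κ := by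
      rw [Real.mul_rpow hα.le hγpos.le, ← mul_assoc, haα, one_mul]
    rw [← h2] at h1
    have h3 := (Real.rpow_le_rpow_iff (sub_pos.2 hu.1).le (by positivity) hκ).1
      (le_of_mul_le_mul_left h1 ha)
    exact ⟨hu.1, by linarith⟩
  have hfin : volume (Set.Ioc u₀ (u₀ + α * γ T)) ≠ ⊤ := measure_Ioc_lt_top.ne
  rw [integral_eq_volume hu₀.2.le hDcont]
  have hm1 := measureReal_mono hsub1 (measure_ne_top_of_subset hsub2 hfin)
  have hm2 := measureReal_mono hsub2 hfin
  rw [Real.volume_real_Ioc_of_le (by nlinarith), add_sub_cancel_left] at hm1 hm2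
  constructor
  · rw [← mul_pow]
    gcongr
  · calc _ ≤ (α * γ T) ^ 2 := by gcongr
      _ = α ^ 2 * γ T ^ 2 := mul_pow _ _ _
      _ ≤ _ := by gcongr; exact le_max_left _ _
end

section
/- Let u₀ ∈ (0,1), κ > 0, a > 0, ε ∈ (0,1) and δ ∈ (0, 1−u₀]. Let D : [u₀,1] → ℝ be measurable with (1−ε)·a·(u−u₀)^κ ≤ D(u) ≤ (1+ε)·a·(u−u₀)^κ for all u ∈ (u₀, u₀+δ], and, in case u₀+δ < 1, inf_{u∈[u₀+δ,1]} D(u) > 0. Let (τ_T)_{T≥1} be positive reals with τ_T → ∞ and τ_T/√T → 0, and set γ_T = (τ_T/√T)^{1/κ}. Then for all sufficiently large T: (1/((1+ε)·a))^{2/κ}·γ_T² ≤ (∫_{u₀}^1 1{√T·D(u) ≤ τ_T} du)² ≤ (1/((1−ε)·a))^{2/κ}·γ_T². -/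
open MeasureTheory Filter

/-!
Put `x = τ_T / √T`. The integrand is the indicator of the sublevel set `{D ≤ x}`, so the integral is
the length of `{D ≤ x} ∩ (u₀, 1]`. Since `c (u - u₀)^κ ≤ x` exactly when `u - u₀ ≤ (x / c)^(1/κ)`,
the upper bound on `D` puts an interval of length `(x / ((1+ε) a))^(1/κ)` starting at `u₀` inside
this set as soon as that length is at most `δ`, and the lower bound on `D` puts the set inside an
interval of length `(x / ((1-ε) a))^(1/κ)` as soon as `x` is below the infimum of `D` on
`[u₀ + δ, 1]`. Both conditions hold for large `T` because `x → 0`.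
-/

lemma integral_sublevel_eq (D : ℝ → ℝ) (hD : Measurable D) (u₀ x : ℝ) (hu₀ : u₀ ≤ 1) :
    (∫ u in u₀..1, (if D u ≤ x then (1:ℝ) else 0)) =
      volume.real ({u | D u ≤ x} ∩ Set.Ioc u₀ 1) := by
  have hS : MeasurableSet {u | D u ≤ x} := measurableSet_le hD measurable_const
  have h : (fun u => if D u ≤ x then (1:ℝ) else 0) = Set.indicator {u | D u ≤ x} 1 := by
    ext u
    simp [Set.indicator_apply]
  rw [intervalIntegral.integral_of_le hu₀, h, integral_indicator_one hS,
    measureReal_restrict_apply hS]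

lemma mul_rpow_le_iff {c κ x v : ℝ} (hc : 0 < c) (hκ : 0 < κ) (hx : 0 ≤ x) (hv : 0 ≤ v) :
    c * v ^ κ ≤ x ↔ v ≤ (x / c) ^ (1 / κ) := by
  rw [one_div, Real.le_rpow_inv_iff_of_pos hv (by positivity) hκ, le_div_iff₀ hc, mul_comm]

lemma rpow_two_div_mul_sq {c κ x : ℝ} (hc : 0 < c) (hx : 0 ≤ x) :
    (1 / c) ^ (2 / κ) * (x ^ (1 / κ)) ^ 2 = ((x / c) ^ (1 / κ)) ^ 2 := by
  have h : (2:ℝ) / κ = 1 / κ * (2:ℕ) := by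
    push_cast
    ring
  rw [h, Real.rpow_mul_natCast (by positivity), ← mul_pow,
    ← Real.mul_rpow (by positivity) hx, one_div_mul_eq_div]

/-- The refined MSE bound (5.8): if `D` is sandwiched between `(1±ε)·a·(u−u₀)^κ` near
`u₀` and bounded away from zero on `[u₀+δ,1]`, then for `T` large the noiseless mean
squared error `(∫_{u₀}^1 1{√T·D(u) ≤ τ_T} du)²` lies between
`(1/((1+ε)a))^{2/κ}·γ_T²` and `(1/((1−ε)a))^{2/κ}·γ_T²`. -/
theorem stmt14 (u₀ : ℝ) (hu₀ : u₀ ∈ Set.Ioo (0:ℝ) 1)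
    (κ : ℝ) (hκ : 0 < κ) (a : ℝ) (ha : 0 < a)
    (ε : ℝ) (hε : ε ∈ Set.Ioo (0:ℝ) 1)
    (δ : ℝ) (hδ : δ ∈ Set.Ioc (0:ℝ) (1 - u₀))
    (D : ℝ → ℝ) (hDmeas : Measurable D)
    (hsand : ∀ u ∈ Set.Ioc u₀ (u₀ + δ),
      (1 - ε) * a * (u - u₀) ^ κ ≤ D u ∧ D u ≤ (1 + ε) * a * (u - u₀) ^ κ)
    (hfar : u₀ + δ < 1 → 0 < sInf (D '' Set.Icc (u₀ + δ) 1))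
    (τ : ℕ → ℝ) (hτpos : ∀ T, 0 < τ T)
    (hτtop : Tendsto τ atTop atTop)
    (hτT : Tendsto (fun T : ℕ => τ T / Real.sqrt T) atTop (nhds 0))
    (γ : ℕ → ℝ) (hγ : ∀ T, γ T = (τ T / Real.sqrt T) ^ (1 / κ)) :
    ∃ T₀ : ℕ, ∀ T : ℕ, T₀ ≤ T →
      (1 / ((1 + ε) * a)) ^ (2 / κ) * γ T ^ 2 ≤
        (∫ u in u₀..1, (if Real.sqrt T * D u ≤ τ T then (1:ℝ) else 0)) ^ 2 ∧
      (∫ u in u₀..1, (if Real.sqrt T * D u ≤ τ T then (1:ℝ) else 0)) ^ 2 ≤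
        (1 / ((1 - ε) * a)) ^ (2 / κ) * γ T ^ 2 := by
  obtain ⟨hδ0, hδ1⟩ := hδ
  obtain ⟨hε0, hε1⟩ := hε
  have hc₁ : 0 < (1 + ε) * a := by positivity
  have hc₂ : 0 < (1 - ε) * a := mul_pos (by linarith) ha
  -- An unbounded-below image would have `sInf = 0`, so `hfar` does give a pointwise lower bound.
  have hev_far : ∀ᶠ T : ℕ in atTop,
      ∀ u, u₀ + δ < u → u ≤ 1 → τ T / Real.sqrt T < D u := by
    by_cases h : u₀ + δ < 1
    · have hm := hfar h
      have hbdd : BddBelow (D '' Set.Icc (u₀ + δ) 1) := by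
        by_contra hb
        rw [Real.sInf_of_not_bddBelow hb] at hm
        exact lt_irrefl _ hm
      filter_upwards [hτT.eventually_lt_const hm] with T hT u hu hu1
      exact hT.trans_le (csInf_le hbdd ⟨u, ⟨hu.le, hu1⟩, rfl⟩)
    · exact Eventually.of_forall fun T u hu hu1 => absurd (hu.trans_le hu1) h
  have hδκ : 0 < (1 + ε) * a * δ ^ κ := by positivity
  refine eventually_atTop.1 ?_
  filter_upwards [hev_far, hτT.eventually_lt_const hδκ, eventually_ge_atTop 1]
    with T hfarT hnear hT1
  have hs : 0 < Real.sqrt T := Real.sqrt_pos.2 (by exact_mod_cast hT1)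
  have hiff : ∀ u, Real.sqrt T * D u ≤ τ T ↔ D u ≤ τ T / Real.sqrt T := fun u => by
    rw [le_div_iff₀ hs, mul_comm]
  simp only [hiff, hγ]
  have hx : 0 < τ T / Real.sqrt T := div_pos (hτpos T) hs
  generalize τ T / Real.sqrt T = x at *
  rw [integral_sublevel_eq D hDmeas u₀ x hu₀.2.le, rpow_two_div_mul_sq hc₁ hx.le,
    rpow_two_div_mul_sq hc₂ hx.le]
  have hL0 : 0 ≤ (x / ((1 + ε) * a)) ^ (1 / κ) := by positivity
  have hU0 : 0 ≤ (x / ((1 - ε) * a)) ^ (1 / κ) := by positivity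
  have hLδ : (x / ((1 + ε) * a)) ^ (1 / κ) < δ :=
    lt_of_not_ge fun h => hnear.not_ge ((mul_rpow_le_iff hc₁ hκ hx.le hδ0.le).2 h)
  have hlower : Set.Ioc u₀ (u₀ + (x / ((1 + ε) * a)) ^ (1 / κ)) ⊆
      {u | D u ≤ x} ∩ Set.Ioc u₀ 1 := by
    rintro u ⟨hu, hu'⟩
    refine ⟨(hsand u ⟨hu, by linarith⟩).2.trans ?_, hu, by linarith⟩
    exact (mul_rpow_le_iff hc₁ hκ hx.le (by linarith)).2 (by linarith)
  have hupper : {u | D u ≤ x} ∩ Set.Ioc u₀ 1 ⊆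
      Set.Ioc u₀ (u₀ + (x / ((1 - ε) * a)) ^ (1 / κ)) := by
    rintro u ⟨hDu, hu, hu1⟩
    refine ⟨hu, ?_⟩
    have huδ : u ≤ u₀ + δ := le_of_not_gt fun h => (hfarT u h hu1).not_ge hDu
    have := (mul_rpow_le_iff hc₂ hκ hx.le (sub_nonneg.2 hu.le)).1
      ((hsand u ⟨hu, huδ⟩).1.trans hDu)
    linarith
  have h1 := measureReal_mono (μ := volume) hlower
    (measure_ne_top_of_subset Set.inter_subset_right measure_Ioc_lt_top.ne)
  have h2 := measureReal_mono (μ := volume) hupper measure_Ioc_lt_top.ne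
  rw [Real.volume_real_Ioc_of_le (by linarith), add_sub_cancel_left] at h1 h2
  exact ⟨pow_le_pow_left₀ hL0 h1 2, pow_le_pow_left₀ measureReal_nonneg h2 2⟩
end
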